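/- arXiv:1112.3921 — 2 statements merged into one kernel-verified Lean document; each statement's English description precedes it below -/
import Mathlib

section
/- Assume every row of R is nonzero (for every i there exists j with R i j) and every column of R is nonzero (for every j there exists i with R i j). Then R is differentially essential if and only if R has exactly one super essential subsystem. -/
/-!
Super essential subsystems are the circuits of the transversal matroid that `R` defines on the
rows: by Hall's theorem they are the minimal sets `S` of rows with fewer than `|S|` columns in
their support. There are `n + 1` rows and the rank is at most `n`, so there is always a circuit,
and differential essentiality says that the rank is exactly `n`, i.e. that the nullity is one,
which happens exactly when the circuit is unique.

Write `N S` for the set of columns met by the rows of `S`.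

* If `R` is differentially essential then `|N A| ≥ |A| - 1` for every `A`. Two distinct circuits
  `S`, `T` would give `|N (S ∪ T)| ≤ |S ∪ T| - 2`, since `|N|` is submodular and
  `|N (S ∩ T)| ≥ |S ∩ T|`, the intersection being a proper subset of one of the circuits.
* If `T` is the only circuit and `t ∈ T`, then the rows other than `t` contain no circuit, so
  they satisfy Hall's condition and can be matched with the columns.
-/

open scoped Classical

/-- `R` is differentially essential: for some row `i` there is a bijection `e` from the rows
different from `i` to the columns with `R j (e j)` for every `j ≠ i`. -/
def DiffEssential (n : ℕ) (R : Fin (n + 1) → Fin n → Prop) : Prop :=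
  ∃ i : Fin (n + 1), ∃ e : {j : Fin (n + 1) // j ≠ i} ≃ Fin n,
    ∀ j : {j : Fin (n + 1) // j ≠ i}, R j.1 (e j)

/-- A nonempty finset `T` of rows is a super essential subsystem of `R` if, with
`J := {j | ∃ i ∈ T, R i j}`, one has `|J| = |T| - 1` and for every `t ∈ T` there is a
bijection `e : T \ {t} ≃ J` with `R i (e i)` for all `i ∈ T \ {t}`. -/
def SuperEssentialSubsystem (n : ℕ) (R : Fin (n + 1) → Fin n → Prop)
    (T : Finset (Fin (n + 1))) : Prop :=
  T.Nonempty ∧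
    (Finset.univ.filter fun j : Fin n => ∃ i ∈ T, R i j).card = T.card - 1 ∧
    ∀ t ∈ T, ∃ e : {i : Fin (n + 1) // i ∈ T.erase t} ≃
        {j : Fin n // j ∈ Finset.univ.filter fun j : Fin n => ∃ i ∈ T, R i j},
      ∀ i : {i : Fin (n + 1) // i ∈ T.erase t}, R i.1 (e i).1

/-- The set of columns in which some row of `S` has a nonzero entry. -/
noncomputable def colSupport (n : ℕ) (R : Fin (n + 1) → Fin n → Prop) (S : Finset (Fin (n + 1))) :
    Finset (Fin n) :=
  Finset.univ.filter fun j : Fin n => ∃ i ∈ S, R i j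

theorem mem_colSupport {n : ℕ} {R : Fin (n + 1) → Fin n → Prop} {S : Finset (Fin (n + 1))}
    {j : Fin n} : j ∈ colSupport n R S ↔ ∃ i ∈ S, R i j := by
  simp [colSupport]

/-- A matching that is defined on a superset of `A` bounds the support of `A` from below. -/
theorem card_le_card_colSupport {n : ℕ} {R : Fin (n + 1) → Fin n → Prop}
    {p : Fin (n + 1) → Prop} (f : {i // p i} → Fin n) (hf : Function.Injective f)
    (hR : ∀ i, R i.1 (f i)) (A : Finset (Fin (n + 1))) (hA : ∀ i ∈ A, p i) :
    A.card ≤ (colSupport n R A).card := by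
  rw [← Finset.card_attach]
  refine Finset.card_le_card_of_injOn (fun i => f ⟨i.1, hA _ i.2⟩) ?_ ?_
  · intro i _
    exact mem_colSupport.2 ⟨i.1, i.2, hR ⟨i.1, hA _ i.2⟩⟩
  · intro a _ b _ hab
    exact Subtype.ext (congrArg (fun x => x.1) (hf hab))

/-- Hall's theorem for the rows that satisfy `p`. -/
theorem exists_matching {n : ℕ} {R : Fin (n + 1) → Fin n → Prop} (p : Fin (n + 1) → Prop)
    (h : ∀ A : Finset (Fin (n + 1)), (∀ i ∈ A, p i) → A.card ≤ (colSupport n R A).card) :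
    ∃ f : {i // p i} → Fin n, Function.Injective f ∧ ∀ i, R i.1 (f i) := by
  obtain ⟨f, hf, hR⟩ := (Finset.all_card_le_biUnion_card_iff_exists_injective
    (fun i : {i // p i} => Finset.univ.filter fun j => R i.1 j)).1 (by
      intro s
      have h1 := h (s.map (Function.Embedding.subtype p)) (by
        intro i hi
        obtain ⟨x, _, rfl⟩ := Finset.mem_map.1 hi
        exact x.2)
      rw [Finset.card_map] at h1
      refine h1.trans (Finset.card_le_card ?_)
      intro j hj
      obtain ⟨i, hi, hij⟩ := mem_colSupport.1 hj
      obtain ⟨x, hx, rfl⟩ := Finset.mem_map.1 hi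
      exact Finset.mem_biUnion.2 ⟨x, hx, by simpa using hij⟩)
  exact ⟨f, hf, fun i => by simpa using hR i⟩

/-- Every set of rows that violates Hall's inequality contains a super essential subsystem. -/
theorem exists_superEssentialSubsystem {n : ℕ} {R : Fin (n + 1) → Fin n → Prop}
    (A : Finset (Fin (n + 1))) (hA : (colSupport n R A).card < A.card) :
    ∃ T ⊆ A, SuperEssentialSubsystem n R T := by
  induction A using Finset.strongInduction with
  | H A ih =>
  by_cases hmin : ∃ B ⊂ A, (colSupport n R B).card < B.card
  · obtain ⟨B, hBA, hB⟩ := hmin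
    obtain ⟨T, hT, hs⟩ := ih B hBA hB
    exact ⟨T, hT.trans hBA.1, hs⟩
  push Not at hmin
  have hne : A.Nonempty := Finset.card_pos.1 (by omega)
  have hmono : ∀ t, colSupport n R (A.erase t) ⊆ colSupport n R A := by
    intro t j hj
    obtain ⟨i, hi, hij⟩ := mem_colSupport.1 hj
    exact mem_colSupport.2 ⟨i, Finset.mem_of_mem_erase hi, hij⟩
  have hcard : (colSupport n R A).card = A.card - 1 := by
    obtain ⟨t, ht⟩ := hne
    have h1 := hmin _ (Finset.erase_ssubset ht)
    have h2 := Finset.card_le_card (hmono t)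
    rw [Finset.card_erase_of_mem ht] at h1
    omega
  refine ⟨A, subset_rfl, hne, hcard, fun t ht => ?_⟩
  obtain ⟨f, hf, hR⟩ := exists_matching (R := R) (fun i => i ∈ A.erase t)
    (fun B hB => hmin B (lt_of_le_of_lt (show B ≤ A.erase t from hB) (Finset.erase_ssubset ht)))
  let g : {i // i ∈ A.erase t} → {j // j ∈ colSupport n R A} := fun i =>
    ⟨f i, mem_colSupport.2 ⟨i.1, Finset.mem_of_mem_erase i.2, hR i⟩⟩
  have hg : Function.Bijective g := by
    rw [Fintype.bijective_iff_injective_and_card]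
    refine ⟨fun a b hab => hf (congrArg (fun x => x.1) hab), ?_⟩
    rw [Fintype.card_coe, Fintype.card_coe, hcard, Finset.card_erase_of_mem ht]
  exact ⟨Equiv.ofBijective g hg, fun i => hR i⟩

/-- Proper subsets of a super essential subsystem satisfy Hall's inequality. -/
theorem SuperEssentialSubsystem.card_le {n : ℕ} {R : Fin (n + 1) → Fin n → Prop}
    {T A : Finset (Fin (n + 1))} (hT : SuperEssentialSubsystem n R T) (hA : A ⊂ T) :
    A.card ≤ (colSupport n R A).card := by
  obtain ⟨t, ht, htA⟩ := Finset.exists_of_ssubset hA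
  obtain ⟨e, he⟩ := hT.2.2 t ht
  refine card_le_card_colSupport (fun i => (e i).1)
    (Subtype.val_injective.comp e.injective) he A ?_
  intro i hi
  exact Finset.mem_erase.2 ⟨fun h => htA (h ▸ hi), hA.1 hi⟩

theorem SuperEssentialSubsystem.card_add_one {n : ℕ} {R : Fin (n + 1) → Fin n → Prop}
    {T : Finset (Fin (n + 1))} (hT : SuperEssentialSubsystem n R T) :
    (colSupport n R T).card + 1 = T.card := by
  have h1 := hT.1.card_pos
  have h2 : (colSupport n R T).card = T.card - 1 := hT.2.1
  omega

theorem DiffEssential.card_le {n : ℕ} {R : Fin (n + 1) → Fin n → Prop}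
    (h : DiffEssential n R) (A : Finset (Fin (n + 1))) :
    A.card ≤ (colSupport n R A).card + 1 := by
  obtain ⟨i, e, he⟩ := h
  have h1 := card_le_card_colSupport e e.injective he (A.erase i)
    (fun j hj => Finset.ne_of_mem_erase hj)
  have h2 : colSupport n R (A.erase i) ⊆ colSupport n R A := by
    intro j hj
    obtain ⟨k, hk, hkj⟩ := mem_colSupport.1 hj
    exact mem_colSupport.2 ⟨k, Finset.mem_of_mem_erase hk, hkj⟩
  have h3 := Finset.card_le_card h2
  have h4 := Finset.pred_card_le_card_erase (s := A) (a := i)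
  omega

/-- The support size is submodular. -/
theorem card_colSupport_union_add_inter {n : ℕ} (R : Fin (n + 1) → Fin n → Prop)
    (S T : Finset (Fin (n + 1))) :
    (colSupport n R (S ∪ T)).card + (colSupport n R (S ∩ T)).card ≤
      (colSupport n R S).card + (colSupport n R T).card := by
  rw [← Finset.card_union_add_card_inter (colSupport n R S)]
  refine add_le_add (Finset.card_le_card ?_) (Finset.card_le_card ?_)
  · intro j hj
    obtain ⟨i, hi, hij⟩ := mem_colSupport.1 hj
    rcases Finset.mem_union.1 hi with hi | hi
    · exact Finset.mem_union_left _ (mem_colSupport.2 ⟨i, hi, hij⟩)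
    · exact Finset.mem_union_right _ (mem_colSupport.2 ⟨i, hi, hij⟩)
  · intro j hj
    obtain ⟨i, hi, hij⟩ := mem_colSupport.1 hj
    obtain ⟨hS, hT⟩ := Finset.mem_inter.1 hi
    exact Finset.mem_inter.2
      ⟨mem_colSupport.2 ⟨i, hS, hij⟩, mem_colSupport.2 ⟨i, hT, hij⟩⟩

theorem DiffEssential.superEssentialSubsystem_unique {n : ℕ} {R : Fin (n + 1) → Fin n → Prop}
    (h : DiffEssential n R) {S T : Finset (Fin (n + 1))} (hS : SuperEssentialSubsystem n R S)
    (hT : SuperEssentialSubsystem n R T) : S = T := by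
  by_contra hne
  have hinter : (S ∩ T).card ≤ (colSupport n R (S ∩ T)).card := by
    by_cases hST : S ⊆ T
    · rw [Finset.inter_eq_left.2 hST]
      exact hT.card_le (lt_of_le_of_ne hST hne)
    · exact hS.card_le (lt_of_le_of_ne (show S ∩ T ≤ S from Finset.inter_subset_left)
        fun h' => hST (Finset.inter_eq_left.1 h'))
  have h1 := card_colSupport_union_add_inter R S T
  have h2 := h.card_le (S ∪ T)
  have h3 := Finset.card_union_add_card_inter S T
  have h4 := hS.card_add_one
  have h5 := hT.card_add_one
  omega


/-- Assume every row and every column of `R` is nonzero. Then `R` is differentially essential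
iff `R` has exactly one super essential subsystem. -/
theorem diffEssential_iff_unique_superEssentialSubsystem (n : ℕ) (hn : 1 ≤ n)
    (R : Fin (n + 1) → Fin n → Prop)
    (hrow : ∀ i : Fin (n + 1), ∃ j : Fin n, R i j)
    (hcol : ∀ j : Fin n, ∃ i : Fin (n + 1), R i j) :
    DiffEssential n R ↔
      ∃! T : Finset (Fin (n + 1)), SuperEssentialSubsystem n R T := by
  constructor
  · intro h
    obtain ⟨T, -, hT⟩ := exists_superEssentialSubsystem (R := R) Finset.univ (by
      have := Finset.card_le_univ (colSupport n R Finset.univ)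
      simp only [Fintype.card_fin] at this
      simp only [Finset.card_univ, Fintype.card_fin]
      omega)
    exact ⟨T, hT, fun S hS => h.superEssentialSubsystem_unique hS hT⟩
  · rintro ⟨T, hT, huniq⟩
    obtain ⟨t, ht⟩ := hT.1
    obtain ⟨f, hf, hR⟩ := exists_matching (R := R) (fun j => j ≠ t) (by
      intro A hA
      by_contra hlt
      obtain ⟨S, hSA, hS⟩ := exists_superEssentialSubsystem (R := R) A (by omega)
      have hST : S = T := huniq S hS
      exact hA t (hSA (hST ▸ ht)) rfl)
    have hb : Function.Bijective f := by
      rw [Fintype.bijective_iff_injective_and_card]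
      exact ⟨hf, by simp⟩
    exact ⟨t, Equiv.ofBijective f hb, fun j => hR j⟩
end

section
/- If the system is super essential, then γ_j + γ ≤ N for every j : Fin (n−1), and moreover the integer identity Σ_{j : Fin (n−1)} (N − γ_j − γ + 1) + 1 = Σ_{i : Fin n} (N − o i − γ + 1) holds; that is, the coefficient matrix M(P) of the set ps(P) of derivatives ∂^k f_i (0 ≤ k ≤ N − o i − γ) in the L − 1 indeterminates u_{j,k} (γ̲_j ≤ k ≤ N − γ̄_j − γ) together with one column of constant terms is a square L × L matrix, where L = Σ_i (N − o i − γ + 1). -/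
/-!
If `S i j ≠ ∅`, then `γ̲_j ≤ min (S i j)`, `γ̄_j ≤ o i - max (S i j)` and
`min (S i j) ≤ max (S i j) ≤ o i`, so `γ_j ≤ o i` (`gammaJ_le_sysOrd`). Summing this over the
pairs of the matching that super essentiality provides for the rows other than `i` gives
`γ ≤ N - o i` (`sysOrd_add_gammaTot_le`). Since every column `j` meets some row `i`, also
`γ_j + γ ≤ o i + γ ≤ N`. None of the subtractions in the count therefore truncates, and both
sides of the identity equal `n N - (n + 1) γ + n + 1`, because `∑ γ_j = γ` and `∑ o i = N`.
-/

open scoped Classical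

/-- The order `o i` of the `i`-th polynomial: the maximum over the `j` with nonempty support
`S i j` of the maximum element of `S i j`. -/
noncomputable def sysOrd (n : ℕ) (S : Fin (n + 1) → Fin n → Finset ℕ) (i : Fin (n + 1)) : ℕ :=
  (Finset.univ.filter fun j : Fin n => S i j ≠ ∅).sup fun j => (S i j).sup id

/-- `N`, the sum of the orders of the polynomials. -/
noncomputable def sysN (n : ℕ) (S : Fin (n + 1) → Fin n → Finset ℕ) : ℕ :=
  ∑ i, sysOrd n S i

/-- `γ̲_j`, the minimum of `min (S i j)` over those `i` with `S i j ≠ ∅`. -/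
noncomputable def gammaLow (n : ℕ) (S : Fin (n + 1) → Fin n → Finset ℕ) (j : Fin n) : ℕ :=
  sInf {m : ℕ | ∃ i : Fin (n + 1), S i j ≠ ∅ ∧ m = sInf (↑(S i j) : Set ℕ)}

/-- `γ̄_j`, the minimum of `o i − max (S i j)` over those `i` with `S i j ≠ ∅`. -/
noncomputable def gammaHigh (n : ℕ) (S : Fin (n + 1) → Fin n → Finset ℕ) (j : Fin n) : ℕ :=
  sInf {m : ℕ | ∃ i : Fin (n + 1), S i j ≠ ∅ ∧ m = sysOrd n S i - (S i j).sup id}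

/-- `γ_j := γ̲_j + γ̄_j`. -/
noncomputable def gammaJ (n : ℕ) (S : Fin (n + 1) → Fin n → Finset ℕ) (j : Fin n) : ℕ :=
  gammaLow n S j + gammaHigh n S j

/-- `γ := Σ_j γ_j`. -/
noncomputable def gammaTot (n : ℕ) (S : Fin (n + 1) → Fin n → Finset ℕ) : ℕ :=
  ∑ j, gammaJ n S j

/-- The system is super essential: for every `i` there is a bijection `e` from the rows `j ≠ i`
to the columns with `S j (e j) ≠ ∅` for all `j ≠ i`. -/
def SuperEssentialSupp (n : ℕ) (S : Fin (n + 1) → Fin n → Finset ℕ) : Prop :=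
  ∀ i : Fin (n + 1), ∃ e : {j : Fin (n + 1) // j ≠ i} ≃ Fin n,
    ∀ j : {j : Fin (n + 1) // j ≠ i}, S j.1 (e j) ≠ ∅

theorem gammaJ_le_sysOrd {n : ℕ} (S : Fin (n + 1) → Fin n → Finset ℕ)
    {i : Fin (n + 1)} {j : Fin n} (h : S i j ≠ ∅) : gammaJ n S j ≤ sysOrd n S i := by
  have hlow : gammaLow n S j ≤ sInf (↑(S i j) : Set ℕ) := Nat.sInf_le ⟨i, h, rfl⟩
  have hhigh : gammaHigh n S j ≤ sysOrd n S i - (S i j).sup id := Nat.sInf_le ⟨i, h, rfl⟩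
  have hmax : (S i j).sup id ≤ sysOrd n S i :=
    Finset.le_sup (f := fun j => (S i j).sup id) (by simp [h])
  obtain ⟨x, hx⟩ := Finset.nonempty_iff_ne_empty.mpr h
  have hmin : sInf (↑(S i j) : Set ℕ) ≤ x := Nat.sInf_le hx
  have hxmax : x ≤ (S i j).sup id := Finset.le_sup (f := id) hx
  unfold gammaJ
  omega

theorem sysOrd_add_gammaTot_le {n : ℕ} (S : Fin (n + 1) → Fin n → Finset ℕ)
    (hse : SuperEssentialSupp n S) (i : Fin (n + 1)) :
    sysOrd n S i + gammaTot n S ≤ sysN n S := by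
  obtain ⟨e, he⟩ := hse i
  have hγ : gammaTot n S ≤ ∑ k : {k : Fin (n + 1) // k ≠ i}, sysOrd n S k.1 := by
    rw [gammaTot, ← Equiv.sum_comp e]
    exact Finset.sum_le_sum fun k _ => gammaJ_le_sysOrd S (he k)
  have hN : sysN n S = sysOrd n S i + ∑ k : {k : Fin (n + 1) // k ≠ i}, sysOrd n S k.1 :=
    Fintype.sum_eq_add_sum_subtype_ne _ i
  omega

/-- If the system is super essential then `γ_j + γ ≤ N` for every `j`, and the number of
indeterminates `u_{j,k}` with `γ̲_j ≤ k ≤ N − γ̄_j − γ` plus one (for the column of constant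
terms) equals the number `L = Σ_i (N − o i − γ + 1)` of polynomials in `ps(P)`; that is, the
coefficient matrix `M(P)` is a square `L × L` matrix. -/
theorem matrix_is_square (n : ℕ) (hn : 1 ≤ n)
    (S : Fin (n + 1) → Fin n → Finset ℕ)
    (hrow : ∀ i : Fin (n + 1), ∃ j : Fin n, S i j ≠ ∅)
    (hcol : ∀ j : Fin n, ∃ i : Fin (n + 1), S i j ≠ ∅)
    (hse : SuperEssentialSupp n S) :
    (∀ j : Fin n, gammaJ n S j + gammaTot n S ≤ sysN n S) ∧
      (∑ j : Fin n, (sysN n S - gammaJ n S j - gammaTot n S + 1)) + 1 =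
        ∑ i : Fin (n + 1), (sysN n S - sysOrd n S i - gammaTot n S + 1) := by
  have hord := sysOrd_add_gammaTot_le S hse
  have hγ : ∀ j : Fin n, gammaJ n S j + gammaTot n S ≤ sysN n S := fun j => by
    obtain ⟨i, hi⟩ := hcol j
    have := gammaJ_le_sysOrd S hi
    have := hord i
    omega
  refine ⟨hγ, ?_⟩
  -- The inequalities make every subtraction exact, so the identity can be checked in `ℤ`.
  have hl : ∀ j : Fin n, ((sysN n S - gammaJ n S j - gammaTot n S + 1 : ℕ) : ℤ) =
      sysN n S - gammaTot n S + 1 - gammaJ n S j := fun j => by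
    have := hγ j
    omega
  have hr : ∀ i : Fin (n + 1), ((sysN n S - sysOrd n S i - gammaTot n S + 1 : ℕ) : ℤ) =
      sysN n S - gammaTot n S + 1 - sysOrd n S i := fun i => by
    have := hord i
    omega
  have hsγ : ∑ j, (gammaJ n S j : ℤ) = gammaTot n S := by simp [gammaTot]
  have hsN : ∑ i, (sysOrd n S i : ℤ) = sysN n S := by simp [sysN]
  zify
  push_cast at hl hr ⊢
  simp only [hl, hr, Finset.sum_sub_distrib, hsγ, hsN, Finset.sum_const, Finset.card_univ,
    Fintype.card_fin, nsmul_eq_mul]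
  push_cast
  ring
end
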